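/- Lemma 3, part (i): Let N, K, F be positive integers, M ≥ 0 a real, W_1,…,W_N i.i.d. uniform on {1,…,2^F}, and V_k = g_k(W_1,…,W_N) for k ∈ {1,…,K} where each g_k maps into a set of size at most ⌊2^{F·M}⌋. Fix ℓ ∈ {1,…,min(K,N)} and for k ∈ {1,…,ℓ} define α_k := (1/(F·binom(N,ℓ)·ℓ!))·∑_{d ∈ Q_ℓ^dist} I(W_{d_k}; V_1,…,V_k | W_{d_1},…,W_{d_{k−1}}), where Q_ℓ^dist is the set of ordered ℓ-tuples (d_1,…,d_ℓ) of pairwise distinct elements of {1,…,N} (so |Q_ℓ^dist| = binom(N,ℓ)·ℓ!). Then for every k ∈ {1,…,ℓ}: α_k ≤ k·M/(N−k+1). -/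

import Mathlib

/-- Probability that the discrete random variable `X` (on finite space `Ω` with
probability mass function `p`) takes the value `x`. -/
noncomputable def pr {Ω : Type*} [Fintype Ω] {α : Type*} [DecidableEq α]
    (p : Ω → ℝ) (X : Ω → α) (x : α) : ℝ :=
  ∑ ω ∈ Finset.univ.filter (fun ω => X ω = x), p ω

/-- Shannon entropy (base 2) of the discrete random variable `X`. -/
noncomputable def ent {Ω : Type*} [Fintype Ω] {α : Type*} [DecidableEq α]
    (p : Ω → ℝ) (X : Ω → α) : ℝ :=
  -∑ x ∈ Finset.univ.image X, pr p X x * Real.logb 2 (pr p X x)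

/-- Conditional mutual information `I(X;Y|Z) = H(X,Z) + H(Y,Z) − H(X,Y,Z) − H(Z)`
(base 2). -/
noncomputable def cmi {Ω : Type*} [Fintype Ω] {α β γ : Type*}
    [DecidableEq α] [DecidableEq β] [DecidableEq γ]
    (p : Ω → ℝ) (X : Ω → α) (Y : Ω → β) (Z : Ω → γ) : ℝ :=
  ent p (fun ω => (X ω, Z ω)) + ent p (fun ω => (Y ω, Z ω))
    - ent p (fun ω => (X ω, Y ω, Z ω)) - ent p Z

/-!
Gibbs' inequality gives submodularity of the entropy. If the messages `W` are independent, then for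
every set `S` of messages the informations `I(W_x; Y | W_S)`, `x ∉ S`, add up to at most `H(Y)`:
conditionally on `(Y, W_S)` the joint entropy of the remaining messages is at most the sum of their
entropies, while unconditionally independence makes this an equality. In the average over ordered
tuples of distinct messages, `d_k` may be exchanged with any of the `N - k + 1` messages outside
`{d_1, …, d_{k-1}}`, so the average of `I(W_{d_k}; Y | W_{d_1}, …, W_{d_{k-1}})` is at most
`H(Y) / (N - k + 1)`; for `Y = (V_1, …, V_k)` we have `H(Y) ≤ k F M`.
-/

open Finset

section Entropy

variable {Ω : Type*} [Fintype Ω] {α β γ : Type*} [DecidableEq α] [DecidableEq β] [DecidableEq γ]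
  {p : Ω → ℝ}

theorem pr_nonneg (hp : ∀ ω, 0 ≤ p ω) (X : Ω → α) (x : α) : 0 ≤ pr p X x :=
  sum_nonneg fun ω _ => hp ω

theorem pr_apply_pos (hp : ∀ ω, 0 ≤ p ω) (X : Ω → α) {ω : Ω} (hω : 0 < p ω) :
    0 < pr p X (X ω) :=
  hω.trans_le <| single_le_sum (fun ω _ => hp ω) (by simp)

theorem pr_apply_le_of_determines (hp : ∀ ω, 0 ≤ p ω) {X : Ω → α} {Y : Ω → β}
    (h : ∀ ω ω', X ω = X ω' → Y ω = Y ω') (ω : Ω) : pr p X (X ω) ≤ pr p Y (Y ω) :=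
  sum_le_sum_of_subset_of_nonneg (monotone_filter_right _ fun ω' _ => h ω' ω) fun ω _ _ => hp ω

theorem sum_pr_mul (p : Ω → ℝ) (X : Ω → α) (φ : α → ℝ) :
    ∑ x ∈ univ.image X, pr p X x * φ x = ∑ ω, p ω * φ (X ω) := by
  rw [← sum_fiberwise_of_maps_to fun ω _ => mem_image_of_mem X (mem_univ ω)]
  refine sum_congr rfl fun x _ => ?_
  rw [pr, sum_mul]
  exact sum_congr rfl fun ω hω => by rw [(mem_filter.1 hω).2]

theorem sum_pr (p : Ω → ℝ) (X : Ω → α) : ∑ x ∈ univ.image X, pr p X x = ∑ ω, p ω := by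
  simpa only [mul_one] using sum_pr_mul p X fun _ => 1

theorem sum_pr_prodMk (p : Ω → ℝ) (X : Ω → α) (Z : Ω → γ) (z : γ) :
    ∑ x ∈ univ.image X, pr p (fun ω => (X ω, Z ω)) (x, z) = pr p Z z := by
  rw [pr, ← sum_fiberwise_of_maps_to fun ω _ => mem_image_of_mem X (mem_univ ω)]
  simp only [pr, filter_filter, Prod.mk.injEq, and_comm]

theorem ent_eq_sum (p : Ω → ℝ) (X : Ω → α) :
    ent p X = -∑ ω, p ω * Real.logb 2 (pr p X (X ω)) := by
  rw [ent, sum_pr_mul p X fun x => Real.logb 2 (pr p X x)]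

theorem ent_congr {X : Ω → α} {Y : Ω → β} (h : ∀ ω ω', X ω = X ω' ↔ Y ω = Y ω') :
    ent p X = ent p Y := by
  simp only [ent_eq_sum, pr, h]

theorem cmi_congr_right {δ : Type*} [DecidableEq δ] (X : Ω → α) (Y : Ω → β) {Z : Ω → γ}
    {Z' : Ω → δ} (h : ∀ ω ω', Z ω = Z ω' ↔ Z' ω = Z' ω') : cmi p X Y Z = cmi p X Y Z' := by
  simp only [cmi, ent_eq_sum, pr, Prod.mk.injEq, h]

theorem ent_le_of_determines (hp : ∀ ω, 0 ≤ p ω) {X : Ω → α} {Y : Ω → β}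
    (h : ∀ ω ω', X ω = X ω' → Y ω = Y ω') : ent p Y ≤ ent p X := by
  rw [ent_eq_sum, ent_eq_sum, neg_le_neg_iff]
  refine sum_le_sum fun ω _ => ?_
  rcases (hp ω).eq_or_lt with h0 | hpos
  · simp [← h0]
  · have hlog := Real.logb_le_logb_of_le one_lt_two (pr_apply_pos hp X hpos)
      (pr_apply_le_of_determines hp h ω)
    exact mul_le_mul_of_nonneg_left hlog hpos.le

theorem ent_const (hp : p ∈ stdSimplex ℝ Ω) (a : α) : ent p (fun _ => a) = 0 := by
  simp [ent_eq_sum, pr, hp.2]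

/-- Gibbs' inequality, with `q` in the role of the likelihood ratio. -/
theorem sum_mul_logb_nonpos {q : Ω → ℝ} (hp : ∀ ω, 0 ≤ p ω) (hq : ∀ ω, 0 < p ω → 0 < q ω)
    (h : ∑ ω, p ω * q ω ≤ ∑ ω, p ω) : ∑ ω, p ω * Real.logb 2 (q ω) ≤ 0 := by
  have hlog : ∑ ω, p ω * Real.log (q ω) ≤ 0 := calc
    ∑ ω, p ω * Real.log (q ω) ≤ ∑ ω, p ω * (q ω - 1) := by
      refine sum_le_sum fun ω _ => ?_
      rcases (hp ω).eq_or_lt with h0 | hpos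
      · simp [← h0]
      · exact mul_le_mul_of_nonneg_left (Real.log_le_sub_one_of_pos (hq ω hpos)) hpos.le
    _ = ∑ ω, p ω * q ω - ∑ ω, p ω := by simp only [mul_sub, mul_one, sum_sub_distrib]
    _ ≤ 0 := sub_nonpos.2 h
  simp only [Real.logb, ← mul_div_assoc, ← sum_div]
  exact div_nonpos_of_nonpos_of_nonneg hlog (Real.log_nonneg one_le_two)

theorem ent_le_logb_card [Fintype α] (hp : p ∈ stdSimplex ℝ Ω) (X : Ω → α) :
    ent p X ≤ Real.logb 2 (Fintype.card α) := by
  have hcard (ω : Ω) : (0 : ℝ) < Fintype.card α :=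
    Nat.cast_pos.2 (Fintype.card_pos_iff.2 ⟨X ω⟩)
  have hratio : ∑ ω, p ω * (pr p X (X ω) * Fintype.card α)⁻¹ ≤ ∑ ω, p ω := calc
    ∑ ω, p ω * (pr p X (X ω) * Fintype.card α)⁻¹
        = ∑ x ∈ univ.image X, pr p X x * (pr p X x * Fintype.card α)⁻¹ :=
      (sum_pr_mul p X fun x => (pr p X x * Fintype.card α)⁻¹).symm
    _ ≤ ∑ _x ∈ univ.image X, (Fintype.card α : ℝ)⁻¹ := by
      refine sum_le_sum fun x _ => ?_
      rw [mul_inv, ← mul_assoc]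
      exact mul_le_of_le_one_left (by positivity) mul_inv_le_one
    _ ≤ 1 := by
      rw [sum_const, nsmul_eq_mul, ← div_eq_mul_inv]
      exact div_le_one_of_le₀ (Nat.cast_le.2 (card_le_univ _)) (Nat.cast_nonneg _)
    _ = ∑ ω, p ω := hp.2.symm
  have hgibbs := sum_mul_logb_nonpos hp.1
    (fun ω hω => inv_pos.2 (mul_pos (pr_apply_pos hp.1 X hω) (hcard ω))) hratio
  have hlog (ω : Ω) : p ω * Real.logb 2 (pr p X (X ω) * Fintype.card α)⁻¹
      = -(p ω * Real.logb 2 (pr p X (X ω))) - p ω * Real.logb 2 (Fintype.card α) := by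
    rcases (hp.1 ω).eq_or_lt with h0 | hpos
    · simp [← h0]
    · rw [Real.logb_inv, Real.logb_mul (pr_apply_pos hp.1 X hpos).ne' (hcard ω).ne']
      ring
  simp only [hlog, sum_sub_distrib, sum_neg_distrib, ← sum_mul, hp.2, one_mul] at hgibbs
  rw [ent_eq_sum]
  exact sub_nonpos.1 hgibbs

theorem ent_le_of_card_le_floor_two_rpow [Fintype α] (hp : p ∈ stdSimplex ℝ Ω) (X : Ω → α) {c : ℝ}
    (hc : Fintype.card α ≤ ⌊(2 : ℝ) ^ c⌋₊) : ent p X ≤ c := by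
  obtain ⟨ω⟩ : Nonempty Ω := by
    by_contra hempty
    rw [not_nonempty_iff] at hempty
    simpa using hp.2
  have hcard : (0 : ℝ) < Fintype.card α := Nat.cast_pos.2 (Fintype.card_pos_iff.2 ⟨X ω⟩)
  refine (ent_le_logb_card hp X).trans ((Real.logb_le_iff_le_rpow one_lt_two hcard).2 ?_)
  exact (Nat.le_floor_iff (by positivity)).1 hc

/-- Not an equality in general: triples `(x, y, z)` of probability zero are missing on the left. -/
theorem sum_mul_condIndep_ratio_le (hp : ∀ ω, 0 ≤ p ω) (X : Ω → α) (Y : Ω → β) (Z : Ω → γ) :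
    ∑ ω, p ω * (pr p (fun ω => (X ω, Z ω)) (X ω, Z ω) * pr p (fun ω => (Y ω, Z ω)) (Y ω, Z ω) /
        (pr p (fun ω => (X ω, Y ω, Z ω)) (X ω, Y ω, Z ω) * pr p Z (Z ω))) ≤ ∑ ω, p ω := by
  set XZ := fun ω => (X ω, Z ω)
  set YZ := fun ω => (Y ω, Z ω)
  set XYZ := fun ω => (X ω, Y ω, Z ω)
  have hnonneg (t : α × β × γ) :
      0 ≤ pr p XZ (t.1, t.2.2) * pr p YZ t.2 / pr p Z t.2.2 :=
    div_nonneg (mul_nonneg (pr_nonneg hp _ _) (pr_nonneg hp _ _)) (pr_nonneg hp _ _)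
  calc
    _ = ∑ t ∈ univ.image XYZ, pr p XYZ t *
          (pr p XZ (t.1, t.2.2) * pr p YZ t.2 / (pr p XYZ t * pr p Z t.2.2)) :=
      (sum_pr_mul p XYZ fun t =>
        pr p XZ (t.1, t.2.2) * pr p YZ t.2 / (pr p XYZ t * pr p Z t.2.2)).symm
    _ ≤ ∑ t ∈ univ.image XYZ, pr p XZ (t.1, t.2.2) * pr p YZ t.2 / pr p Z t.2.2 := by
      refine sum_le_sum fun t _ => ?_
      rcases eq_or_ne (pr p XYZ t) 0 with h0 | hne
      · simpa [h0] using hnonneg t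
      · rw [← mul_div_assoc, mul_div_mul_left _ _ hne]
    _ ≤ ∑ t ∈ univ.image X ×ˢ univ.image Y ×ˢ univ.image Z,
          pr p XZ (t.1, t.2.2) * pr p YZ t.2 / pr p Z t.2.2 := by
      refine sum_le_sum_of_subset_of_nonneg ?_ fun t _ _ => hnonneg t
      intro t ht
      obtain ⟨ω, -, rfl⟩ := mem_image.1 ht
      simp [XYZ]
    _ = ∑ z ∈ univ.image Z, (∑ x ∈ univ.image X, pr p XZ (x, z)) *
          (∑ y ∈ univ.image Y, pr p YZ (y, z)) / pr p Z z := by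
      simp only [sum_product, sum_mul_sum, sum_div]
      exact (sum_congr rfl fun x _ => sum_comm).trans sum_comm
    _ = ∑ z ∈ univ.image Z, pr p Z z := by
      simp only [XZ, YZ, sum_pr_prodMk, mul_self_div_self]
    _ = ∑ ω, p ω := sum_pr p Z

theorem ent_submodular (hp : ∀ ω, 0 ≤ p ω) (X : Ω → α) (Y : Ω → β) (Z : Ω → γ) :
    ent p (fun ω => (X ω, Y ω, Z ω)) + ent p Z
      ≤ ent p (fun ω => (X ω, Z ω)) + ent p (fun ω => (Y ω, Z ω)) := by
  set XZ := fun ω => (X ω, Z ω)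
  set YZ := fun ω => (Y ω, Z ω)
  set XYZ := fun ω => (X ω, Y ω, Z ω)
  have hgibbs := sum_mul_logb_nonpos
    (q := fun ω => pr p XZ (XZ ω) * pr p YZ (YZ ω) / (pr p XYZ (XYZ ω) * pr p Z (Z ω))) hp
    (fun ω hω => div_pos (mul_pos (pr_apply_pos hp XZ hω) (pr_apply_pos hp YZ hω))
      (mul_pos (pr_apply_pos hp XYZ hω) (pr_apply_pos hp Z hω)))
    (sum_mul_condIndep_ratio_le hp X Y Z)
  have hlog (ω : Ω) : p ω * Real.logb 2
        (pr p XZ (XZ ω) * pr p YZ (YZ ω) / (pr p XYZ (XYZ ω) * pr p Z (Z ω)))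
      = p ω * Real.logb 2 (pr p XZ (XZ ω)) + p ω * Real.logb 2 (pr p YZ (YZ ω))
        - p ω * Real.logb 2 (pr p XYZ (XYZ ω)) - p ω * Real.logb 2 (pr p Z (Z ω)) := by
    rcases (hp ω).eq_or_lt with h0 | hpos
    · simp [← h0]
    · have hXZ := (pr_apply_pos hp XZ hpos).ne'
      have hYZ := (pr_apply_pos hp YZ hpos).ne'
      have hXYZ := (pr_apply_pos hp XYZ hpos).ne'
      have hZ := (pr_apply_pos hp Z hpos).ne'
      rw [Real.logb_div (mul_ne_zero hXZ hYZ) (mul_ne_zero hXYZ hZ), Real.logb_mul hXZ hYZ,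
        Real.logb_mul hXYZ hZ]
      ring
  simp only [hlog, sum_sub_distrib, sum_add_distrib] at hgibbs
  simp only [ent_eq_sum]
  linarith

theorem ent_prodMk_le (hp : p ∈ stdSimplex ℝ Ω) (X : Ω → α) (Y : Ω → β) :
    ent p (fun ω => (X ω, Y ω)) ≤ ent p X + ent p Y := by
  have h := ent_submodular hp.1 X Y fun _ => ()
  rw [ent_const hp, add_zero] at h
  convert h using 2 <;> exact ent_congr (by simp)

end Entropy

section Families

variable {Ω ι : Type*} {A : ι → Type*}

/-- The subfamily `X_S = (X_i)_{i ∈ S}` of a family of random variables, as a single random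
variable. -/
def subfamily (X : ∀ i, Ω → A i) (S : Finset ι) (ω : Ω) (i : S) : A i := X i ω

theorem subfamily_eq_iff {X : ∀ i, Ω → A i} {S : Finset ι} {ω ω' : Ω} :
    subfamily X S ω = subfamily X S ω' ↔ ∀ i ∈ S, X i ω = X i ω' := by
  simp only [funext_iff, subfamily, Subtype.forall]

variable [Fintype Ω] {p : Ω → ℝ} [∀ i, DecidableEq (A i)]

theorem ent_subfamily_prodMk_sub_le {γ : Type*} [DecidableEq γ]
    (hp : ∀ ω, 0 ≤ p ω) (X : ∀ i, Ω → A i) (Z : Ω → γ) (S : Finset ι) :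
    ent p (fun ω => (subfamily X S ω, Z ω)) - ent p Z
      ≤ ∑ i ∈ S, (ent p (fun ω => (X i ω, Z ω)) - ent p Z) := by
  classical
  induction S using Finset.induction_on with
  | empty =>
    rw [sum_empty, sub_nonpos]
    exact (ent_congr fun ω ω' => by simp [subfamily_eq_iff]).le
  | insert i S hi ih =>
    have hinsert : ent p (fun ω => (subfamily X (insert i S) ω, Z ω))
        = ent p (fun ω => (X i ω, subfamily X S ω, Z ω)) :=
      ent_congr fun ω ω' => by simp [subfamily_eq_iff, and_assoc]
    rw [sum_insert hi, hinsert]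
    linarith [ent_submodular hp (X i) (subfamily X S) Z]

theorem ent_subfamily_le_sum (hp : p ∈ stdSimplex ℝ Ω) (X : ∀ i, Ω → A i)
    (S : Finset ι) : ent p (subfamily X S) ≤ ∑ i ∈ S, ent p (X i) := by
  have h := ent_subfamily_prodMk_sub_le hp.1 X (fun _ => ()) S
  simp only [ent_const hp, sub_zero] at h
  convert h using 2 <;> exact ent_congr (by simp)

variable [Fintype ι]

theorem ent_pi_le_sum (hp : p ∈ stdSimplex ℝ Ω) (X : ∀ i, Ω → A i) :
    ent p (fun ω i => X i ω) ≤ ∑ i, ent p (X i) :=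
  (ent_congr fun ω ω' => by rw [subfamily_eq_iff, funext_iff]; simp).trans_le
    (ent_subfamily_le_sum hp X univ)

/-- Mutual independence of finitely many discrete random variables: the joint mass function is the
product of the marginal ones. -/
def IsIndepFamily (p : Ω → ℝ) (X : ∀ i, Ω → A i) : Prop :=
  ∀ a : ∀ i, A i, pr p (fun ω i => X i ω) a = ∏ i, pr p (X i) (a i)

theorem IsIndepFamily.ent_pi_eq_sum {X : ∀ i, Ω → A i} (hX : IsIndepFamily p X)
    (hp : ∀ ω, 0 ≤ p ω) : ent p (fun ω i => X i ω) = ∑ i, ent p (X i) := by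
  simp only [ent_eq_sum, sum_neg_distrib, neg_inj]
  rw [sum_comm]
  refine sum_congr rfl fun ω _ => ?_
  rcases (hp ω).eq_or_lt with h0 | hpos
  · simp [← h0]
  · rw [hX, Real.logb_prod _ _ fun i _ => (pr_apply_pos hp (X i) hpos).ne', mul_sum]

theorem IsIndepFamily.sum_cmi_le_ent [DecidableEq ι] {β : Type*} [DecidableEq β]
    {X : ∀ i, Ω → A i} (hX : IsIndepFamily p X) (hp : p ∈ stdSimplex ℝ Ω) (Y : Ω → β)
    (S : Finset ι) : ∑ i ∈ Sᶜ, cmi p (X i) Y (subfamily X S) ≤ ent p Y := by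
  set Z := fun ω => (Y ω, subfamily X S ω)
  have hcmi (i : ι) :
      cmi p (X i) Y (subfamily X S) ≤ ent p (X i) - (ent p (fun ω => (X i ω, Z ω)) - ent p Z) := by
    rw [cmi]
    linarith [ent_prodMk_le hp (X i) (subfamily X S)]
  have hchain := ent_subfamily_prodMk_sub_le hp.1 X Z Sᶜ
  have hZ : ent p Z ≤ ent p Y + ∑ i ∈ S, ent p (X i) :=
    (ent_prodMk_le hp Y _).trans (by gcongr; exact ent_subfamily_le_sum hp X S)
  have hall : ∑ i, ent p (X i) ≤ ent p (fun ω => (subfamily X Sᶜ ω, Z ω)) := by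
    rw [← hX.ent_pi_eq_sum hp.1]
    refine ent_le_of_determines hp.1 fun ω ω' h => funext fun i => ?_
    simp only [Z, Prod.mk.injEq, subfamily_eq_iff] at h
    by_cases hi : i ∈ S
    · exact h.2.2 i hi
    · exact h.1 i (mem_compl.2 hi)
  calc
    ∑ i ∈ Sᶜ, cmi p (X i) Y (subfamily X S)
      ≤ ∑ i ∈ Sᶜ, ent p (X i) - ∑ i ∈ Sᶜ, (ent p (fun ω => (X i ω, Z ω)) - ent p Z) := by
        rw [← sum_sub_distrib]
        exact sum_le_sum fun i _ => hcmi i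
    _ ≤ ent p Y := by linarith [sum_add_sum_compl S fun i => ent p (X i)]

end Families

section Uniform

theorem uniform_mem_stdSimplex {Ω : Type*} [Fintype Ω] [Nonempty Ω] :
    (fun _ : Ω => (1 : ℝ) / Fintype.card Ω) ∈ stdSimplex ℝ Ω :=
  ⟨fun _ => by positivity, by simp⟩

variable {ι : Type*} [Fintype ι] [DecidableEq ι] {A : ι → Type*} [∀ i, Fintype (A i)]
  [∀ i, DecidableEq (A i)] [∀ i, Nonempty (A i)]

theorem pr_uniform_eval (i : ι) (a : A i) :
    pr (fun _ : ∀ i, A i => (1 : ℝ) / Fintype.card (∀ i, A i)) (fun ω => ω i) a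
      = 1 / Fintype.card (A i) := by
  have hfiber : #{ω : ∀ i, A i | ω i = a} = ∏ j ∈ univ.erase i, Fintype.card (A j) := by
    simpa using
      Fintype.card_filter_piFinset_eq_of_mem (fun j => (univ : Finset (A j))) i (mem_univ a)
  have hcard : Fintype.card (A i) * #{ω : ∀ i, A i | ω i = a} = Fintype.card (∀ i, A i) := by
    rw [hfiber, Fintype.card_pi, mul_prod_erase _ (fun j => Fintype.card (A j)) (mem_univ i)]
  rw [pr, sum_const, nsmul_eq_mul, mul_one_div, div_eq_div_iff (by positivity) (by positivity),
    one_mul, mul_comm]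
  exact_mod_cast hcard

theorem isIndepFamily_uniform_eval :
    IsIndepFamily (fun _ : ∀ i, A i => (1 : ℝ) / Fintype.card (∀ i, A i)) fun i ω => ω i := by
  intro a
  simp only [pr_uniform_eval, prod_div_distrib, prod_const_one]
  simp [pr, filter_eq']

end Uniform

section Tuples

variable {κ ι : Type*} [DecidableEq ι]

theorem map_trans_swap {J : Finset κ} {k : κ} (hk : k ∉ J) (d : κ ↪ ι) {x : ι} (hx : x ∉ J.map d) :
    J.map (d.trans (Equiv.swap (d k) x).toEmbedding) = J.map d := by
  simp only [map_eq_image]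
  refine image_congr fun j hj => Equiv.swap_apply_of_ne_of_ne (fun h => ?_) fun h => ?_
  · exact hk (d.injective h ▸ hj)
  · exact hx (h ▸ mem_map_of_mem d hj)

variable [Fintype κ] [Fintype ι]

/-- Replacing `d k` by an element `x` not used on `J` amounts to exchanging `d k` and `x`, an
involution of the set of pairs `(d, x)`. -/
theorem sum_embedding_sum_compl_map {R : Type*} [AddCommMonoid R] {J : Finset κ} {k : κ}
    (hk : k ∉ J) (f : Finset ι → ι → R) :
    ∑ d : κ ↪ ι, ∑ x ∈ (J.map d)ᶜ, f (J.map d) x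
      = (Fintype.card ι - #J) • ∑ d : κ ↪ ι, f (J.map d) (d k) := by
  let swapAt (a : Σ _ : κ ↪ ι, ι) : Σ _ : κ ↪ ι, ι :=
    ⟨a.1.trans (Equiv.swap (a.1 k) a.2).toEmbedding, a.1 k⟩
  have hmem : ∀ a ∈ univ.sigma fun d : κ ↪ ι => (J.map d)ᶜ,
      swapAt a ∈ univ.sigma fun d : κ ↪ ι => (J.map d)ᶜ := by
    rintro ⟨d, x⟩ hx
    simp only [mem_sigma, mem_univ, true_and, mem_compl] at hx
    simpa [swapAt, map_trans_swap hk d hx] using hk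
  have hinvol : ∀ a, swapAt (swapAt a) = a := by
    rintro ⟨d, x⟩
    simp only [swapAt, Function.Embedding.trans_apply, Equiv.toEmbedding_apply,
      Equiv.swap_apply_left, Sigma.mk.injEq, heq_eq_eq, and_true]
    ext j
    simp [Equiv.swap_comm x (d k)]
  calc
    ∑ d : κ ↪ ι, ∑ x ∈ (J.map d)ᶜ, f (J.map d) x
        = ∑ d : κ ↪ ι, ∑ _x ∈ (J.map d)ᶜ, f (J.map d) (d k) := by
      rw [sum_sigma', sum_sigma']
      refine sum_nbij' swapAt swapAt hmem hmem (fun a _ => hinvol a) (fun a _ => hinvol a) ?_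
      rintro ⟨d, x⟩ hx
      simp only [mem_sigma, mem_univ, true_and, mem_compl] at hx
      simp [swapAt, map_trans_swap hk d hx]
    _ = (Fintype.card ι - #J) • ∑ d : κ ↪ ι, f (J.map d) (d k) := by
      simp only [sum_const, card_compl, card_map, smul_sum]

theorem sum_embedding_le {J : Finset κ} {k : κ} (hk : k ∉ J) (hJ : #J < Fintype.card ι)
    {f : Finset ι → ι → ℝ} {C : ℝ} (hf : ∀ S, ∑ x ∈ Sᶜ, f S x ≤ C) :
    ∑ d : κ ↪ ι, f (J.map d) (d k)
      ≤ Fintype.card (κ ↪ ι) * C / ((Fintype.card ι : ℝ) - #J) := by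
  rw [le_div_iff₀ (sub_pos.2 (Nat.cast_lt.2 hJ)), ← Nat.cast_sub hJ.le, mul_comm, ← nsmul_eq_mul,
    ← sum_embedding_sum_compl_map hk f]
  refine (sum_le_sum fun d _ => hf (J.map d)).trans_eq ?_
  rw [sum_const, nsmul_eq_mul, card_univ]

theorem sum_filter_injective [DecidableEq κ] {R : Type*} [AddCommMonoid R] (φ : (κ → ι) → R) :
    ∑ d ∈ univ.filter (fun d : κ → ι => Function.Injective d), φ d = ∑ d : κ ↪ ι, φ d := by
  rw [sum_subtype (p := Function.Injective) _ (by simp)]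
  exact Fintype.sum_equiv (Equiv.subtypeInjectiveEquivEmbedding κ ι) _ _ fun _ => rfl

end Tuples

section Caches

variable {Ω : Type*} [Fintype Ω] {p : Ω → ℝ}

theorem ent_prefix_le {K : ℕ} {V : Fin K → Type*} [∀ i, DecidableEq (V i)]
    (hp : p ∈ stdSimplex ℝ Ω) (g : ∀ i, Ω → V i) {c : ℝ} (hc : 0 ≤ c)
    (hg : ∀ i, ent p (g i) ≤ c) (k : ℕ) :
    ent p (fun ω (i : Fin K) => if (i : ℕ) ≤ k then some (g i ω) else none) ≤ (k + 1) * c := by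
  have hi (i : Fin K) :
      ent p (fun ω => if (i : ℕ) ≤ k then some (g i ω) else none)
        ≤ if (i : ℕ) ≤ k then c else 0 := by
    split_ifs
    · exact (ent_congr (by simp)).trans_le (hg i)
    · exact (ent_const hp none).le
  have hcard : #{i : Fin K | (i : ℕ) ≤ k} ≤ k + 1 :=
    calc
      #{i : Fin K | (i : ℕ) ≤ k} ≤ #(range (k + 1)) :=
        card_le_card_of_injOn Fin.val (fun i hi => by simpa [Nat.lt_succ_iff] using hi)
          Fin.val_injective.injOn
      _ = k + 1 := card_range _
  calc
    _ ≤ ∑ i : Fin K, if (i : ℕ) ≤ k then c else 0 :=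
      (ent_pi_le_sum hp _).trans (sum_le_sum fun i _ => hi i)
    _ = #{i : Fin K | (i : ℕ) ≤ k} * c := by rw [← sum_filter, sum_const, nsmul_eq_mul]
    _ ≤ (k + 1) * c := by gcongr; exact_mod_cast hcard

variable {ι : Type*} [Fintype ι] [DecidableEq ι] {A : ι → Type*} [∀ i, DecidableEq (A i)]

theorem IsIndepFamily.sum_cmi_injective_le {β : Type*} [DecidableEq β] {W : ∀ i, Ω → A i}
    (hW : IsIndepFamily p W) (hp : p ∈ stdSimplex ℝ Ω) (Y : Ω → β) {ℓ : ℕ}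
    (hℓ : ℓ ≤ Fintype.card ι) (k : Fin ℓ) :
    ∑ d ∈ univ.filter (fun d : Fin ℓ → ι => Function.Injective d),
        cmi p (W (d k)) Y (fun ω (j : Fin ℓ) => if (j : ℕ) < k then some (W (d j) ω) else none)
      ≤ (Fintype.card ι).descFactorial ℓ * ent p Y / ((Fintype.card ι : ℝ) - k) := by
  have hprefix (d : Fin ℓ ↪ ι) :
      cmi p (W (d k)) Y (fun ω (j : Fin ℓ) => if (j : ℕ) < k then some (W (d j) ω) else none)
        = cmi p (W (d k)) Y (subfamily W ((Iio k).map d)) := by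
    refine cmi_congr_right _ _ fun ω ω' => ?_
    rw [subfamily_eq_iff, forall_mem_map, funext_iff]
    simp only [mem_Iio, Fin.lt_def]
    refine forall_congr' fun j => ?_
    split_ifs with hj <;> simp [hj]
  have hcount := sum_embedding_le (κ := Fin ℓ) (J := Iio k) (k := k) (by simp)
    (by rw [Fin.card_Iio]; exact k.2.trans_le hℓ)
    (f := fun S x => cmi p (W x) Y (subfamily W S)) fun S => hW.sum_cmi_le_ent hp Y S
  rw [sum_filter_injective]
  simpa only [hprefix, Fin.card_Iio, Fintype.card_embedding_eq, Fintype.card_fin] using hcount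

theorem alpha_bound_i_general {W : ∀ x, Ω → A x} (hW : IsIndepFamily p W)
    (hp : p ∈ stdSimplex ℝ Ω) {F M : ℝ} (hF : 0 < F) (hM : 0 ≤ M) {K : ℕ} {V : Fin K → Type*}
    [∀ i, DecidableEq (V i)] (g : ∀ i, Ω → V i) (hg : ∀ i, ent p (g i) ≤ F * M) {ℓ : ℕ}
    (hℓ : ℓ ≤ Fintype.card ι) (k : Fin ℓ) :
    (1 / (F * ((Fintype.card ι).choose ℓ : ℝ) * (ℓ.factorial : ℝ))) *
        ∑ d ∈ univ.filter (fun d : Fin ℓ → ι => Function.Injective d),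
          cmi p (W (d k))
            (fun ω (i : Fin K) => if (i : ℕ) ≤ (k : ℕ) then some (g i ω) else none)
            (fun ω (j : Fin ℓ) => if (j : ℕ) < (k : ℕ) then some (W (d j) ω) else none)
      ≤ ((k : ℕ) + 1 : ℝ) * M / ((Fintype.card ι : ℝ) - (k : ℕ)) := by
  set n := Fintype.card ι
  have hnk : (0 : ℝ) < n - (k : ℕ) := sub_pos.2 (Nat.cast_lt.2 (k.2.trans_le hℓ))
  have hchoose : (0 : ℝ) < n.choose ℓ := Nat.cast_pos.2 (Nat.choose_pos hℓ)
  have hent := ent_prefix_le hp g (mul_nonneg hF.le hM) hg k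
  rw [one_div, inv_mul_le_iff₀ (by positivity)]
  calc
    _ ≤ n.descFactorial ℓ * _ / ((n : ℝ) - k) := hW.sum_cmi_injective_le hp _ hℓ k
    _ ≤ n.descFactorial ℓ * ((k + 1) * (F * M)) / ((n : ℝ) - k) := by gcongr
    _ = _ := by
      rw [Nat.descFactorial_eq_factorial_mul_choose, Nat.cast_mul]
      ring

end Caches

/-- **Lemma 3, part (i).** With messages i.i.d. uniform (uniform distribution on
`Ω = Fin N → Fin (2^F)`) and caches `V_k = g_k(W_1,…,W_N)` of size at most
`⌊2^{F·M}⌋`, for every `ℓ ∈ {1,…,min(K,N)}` and every `k ∈ {1,…,ℓ}`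
(below `k : Fin ℓ` is the 0-based index, so the receiver is `k+1`):
`α_k ≤ k·M/(N−k+1)`, where `α_k` averages
`(1/F)·I(W_{d_k}; V_1,…,V_k | W_{d_1},…,W_{d_{k−1}})` over all ordered
`ℓ`-tuples `d` with pairwise distinct entries. -/
theorem alpha_bound_i
    (N K F : ℕ) (hN : 0 < N) (hK : 0 < K) (hF : 0 < F)
    (M : ℝ) (hM : 0 ≤ M)
    (V : Fin K → Type) [∀ k, Fintype (V k)] [∀ k, DecidableEq (V k)]
    (hV : ∀ k, Fintype.card (V k) ≤ ⌊(2 : ℝ) ^ ((F : ℝ) * M)⌋₊)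
    (g : ∀ k : Fin K, (Fin N → Fin (2 ^ F)) → V k)
    (ℓ : ℕ) (hℓ1 : 1 ≤ ℓ) (hℓ2 : ℓ ≤ min K N)
    (k : Fin ℓ) :
    (1 / ((F : ℝ) * (N.choose ℓ : ℝ) * (ℓ.factorial : ℝ))) *
        ∑ d ∈ Finset.univ.filter (fun d : Fin ℓ → Fin N => Function.Injective d),
          cmi (fun _ : Fin N → Fin (2 ^ F) =>
                (1 : ℝ) / (Fintype.card (Fin N → Fin (2 ^ F)) : ℝ))
            (fun ω => ω (d k))
            (fun ω => fun i : Fin K =>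
              if (i : ℕ) ≤ (k : ℕ) then some (g i ω) else none)
            (fun ω => fun j : Fin ℓ =>
              if (j : ℕ) < (k : ℕ) then some (ω (d j)) else none)
      ≤ ((k : ℕ) + 1 : ℝ) * M / ((N : ℝ) - (k : ℕ)) := by
  have hp := uniform_mem_stdSimplex (Ω := Fin N → Fin (2 ^ F))
  simpa only [Fintype.card_fin] using alpha_bound_i_general isIndepFamily_uniform_eval hp
    (Nat.cast_pos.2 hF) hM g (fun i => ent_le_of_card_le_floor_two_rpow hp (g i) (hV i))
    (by simpa using (le_min_iff.1 hℓ2).2) k
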